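/- arXiv:math/0410252 — 2 statements merged into one kernel-verified Lean document; each statement's English description precedes it below -/
import Mathlib

section
/- Let n ≥ 1 and k ≥ 1 be integers and let M be a linear subspace of the space of homogeneous polynomials of degree k in ℂ[x_0,…,x_n]. Let Λ ⊂ ℙⁿ(ℂ) be the set of common zeros of all members of M, and suppose that Λ is finite. Then the points of Λ impose independent linear conditions on homogeneous polynomials of degree n(k−1): for every point P ∈ Λ there exists a homogeneous polynomial of degree n(k−1) in ℂ[x_0,…,x_n] that vanishes at every point of Λ \ {P} and does not vanish at P. -/
open MvPolynomial

noncomputable section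

/-- The projective space `ℙ^N(ℂ)`. -/
abbrev ProjPt (N : ℕ) := Projectivization ℂ (Fin (N + 1) → ℂ)

/-- A (homogeneous) polynomial vanishes at a point of projective space. -/
def VanishesAt {N : ℕ} (F : MvPolynomial (Fin (N + 1)) ℂ) (p : ProjPt N) : Prop :=
  eval p.rep F = 0

/-!
A form of large degree separating `P` from `Λ \ {P}` is a product of linear forms. To lower its
degree, choose a linear form `l` without zeros on `Λ`. Macaulay's bound says that every form of
degree `> n * (k - 1)` lies in the ideal `(l, M)`; being congruent to a multiple of `l` modulo
`(M)`, it can be divided by `l` without changing where it vanishes on `Λ`.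

For Macaulay's bound, start from the regular sequence `x₀, …, xₙ` and exchange its last member
first for `l`, then for general elements of `M`, until no variable is left. Prime avoidance keeps
all sequences regular, because `l` and `M` have no common zero other than the origin. Exchanging a
linear form `b` for a form `f` of degree `k` raises the degree bound by `k - 1`: modulo the other
members, multiplication by `b ^ k` maps the forms of degree `e` onto those of degree `e + k` as
soon as `b` generates all forms of degree `> e`, and multiplication by `f`, being injective, must
have the same range.
-/

open RingTheory.Sequence

attribute [local instance] MvPolynomial.gradedAlgebra

section RegularSequence

variable {R : Type*} [CommRing R]

theorem isSMulRegular_quotient_sup_span_singleton {J : Ideal R} {x f : R}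
    (hx : IsSMulRegular (R ⧸ J) x) (hf : IsSMulRegular (R ⧸ (J ⊔ Ideal.span {x})) f) :
    IsSMulRegular (R ⧸ (J ⊔ Ideal.span {f})) x := by
  rw [isSMulRegular_quotient_iff_mem_of_smul_mem] at hx hf ⊢
  simp only [smul_eq_mul, Submodule.mem_sup, Ideal.mem_span_singleton'] at hx hf ⊢
  rintro u ⟨j, hj, _, ⟨v, rfl⟩, hu⟩
  obtain ⟨i, hi, _, ⟨w, rfl⟩, hv⟩ :=
    hf v ⟨-j, J.neg_mem hj, u * x, ⟨u, rfl⟩, by linear_combination -hu⟩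
  have hmem : u - w * f ∈ J := by
    apply hx
    rw [show x * (u - w * f) = j + i * f by linear_combination -hu - f * hv]
    exact J.add_mem hj (J.mul_mem_right _ hi)
  exact ⟨_, hmem, w * f, ⟨w, rfl⟩, sub_add_cancel _ _⟩

theorem isWeaklyRegular_quotient_concat_iff (I : Ideal R) (as : List R) (b : R) :
    IsWeaklyRegular (R ⧸ I) (as ++ [b]) ↔
      IsWeaklyRegular (R ⧸ I) as ∧ IsSMulRegular (R ⧸ (I ⊔ Ideal.ofList as)) b := by
  rw [isWeaklyRegular_append_iff, isWeaklyRegular_singleton_iff]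
  have hmap : (Ideal.ofList as • ⊤ : Submodule R (R ⧸ I)) =
      Submodule.map (Submodule.mkQ I) (Ideal.ofList as) := by
    conv_rhs => rw [← Ideal.mul_top (Ideal.ofList as), ← smul_eq_mul, Submodule.map_smul'',
      Submodule.map_top, Submodule.range_mkQ]
  exact and_congr_right' (((Submodule.quotEquivOfEq _ _ hmap).trans
    (Submodule.quotientQuotientEquivQuotientSup I (Ideal.ofList as))).isSMulRegular_congr b)

theorem isWeaklyRegular_quotient_sup_span_singleton {I : Ideal R} {bs : List R} {f : R}
    (hbs : IsWeaklyRegular (R ⧸ I) bs)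
    (hf : ∀ as, as <+: bs → IsSMulRegular (R ⧸ (I ⊔ Ideal.ofList as)) f) :
    IsWeaklyRegular (R ⧸ (I ⊔ Ideal.span {f})) bs := by
  induction bs using List.reverseRecOn with
  | nil => exact .nil _ _
  | append_singleton as b ih =>
    rw [isWeaklyRegular_quotient_concat_iff] at hbs ⊢
    refine ⟨ih hbs.1 fun as' h => hf as' (h.trans (List.prefix_append _ _)), ?_⟩
    rw [sup_right_comm]
    have hsup : I ⊔ Ideal.ofList (as ++ [b]) = I ⊔ Ideal.ofList as ⊔ Ideal.span {b} := by
      rw [Ideal.ofList_append, Ideal.ofList_singleton, sup_assoc]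
    exact isSMulRegular_quotient_sup_span_singleton hbs.2 (hsup ▸ hf _ List.prefix_rfl)

theorem exists_mem_isSMulRegular_quotient_sup_ofList {I : Ideal R} {as bs : List R} {b : R}
    (h : IsWeaklyRegular (R ⧸ I) (bs ++ [b])) (has : as <+: bs) :
    ∃ x ∈ bs ++ [b], IsSMulRegular (R ⧸ (I ⊔ Ideal.ofList as)) x := by
  induction bs using List.reverseRecOn generalizing b with
  | nil =>
    obtain rfl := List.prefix_nil.1 has
    exact ⟨b, by simp, ((isWeaklyRegular_quotient_concat_iff _ _ _).1 h).2⟩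
  | append_singleton bs b' ih =>
    rw [isWeaklyRegular_quotient_concat_iff] at h
    rcases List.prefix_concat_iff.1 has with rfl | has
    · exact ⟨b, by simp, h.2⟩
    · obtain ⟨x, hx, hreg⟩ := ih h.1 has
      exact ⟨x, List.mem_append_left _ hx, hreg⟩

end RegularSequence

section Avoidance

variable {K : Type*} [Field K] [Infinite K]

theorem exists_mem_forall_notMem_of_not_le {V : Type*} [AddCommGroup V] [Module K V]
    (M : Submodule K V) {A : Set (Submodule K V)} (hA : A.Finite) (hM : ∀ p ∈ A, ¬ M ≤ p) :
    ∃ f ∈ M, ∀ p ∈ A, f ∉ p := by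
  classical
  have htop : ⊤ ∉ hA.toFinset.image (Submodule.comap M.subtype) := by
    simpa [Submodule.comap_subtype_eq_top] using hM
  obtain ⟨f, hf⟩ := (Set.ne_univ_iff_exists_notMem _).1
    (Subspace.biUnion_ne_univ_of_top_notMem htop)
  exact ⟨f, f.2, by simpa using hf⟩

variable {R : Type*} [CommRing R] [IsNoetherianRing R] [Algebra K R]

theorem exists_mem_forall_isSMulRegular (M : Submodule K R) {𝒥 : Set (Ideal R)}
    (h𝒥 : 𝒥.Finite)
    (hM : ∀ J ∈ 𝒥, ∃ x ∈ (J ⊔ Ideal.span (M : Set R)).radical, IsSMulRegular (R ⧸ J) x) :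
    ∃ f ∈ M, ∀ J ∈ 𝒥, IsSMulRegular (R ⧸ J) f := by
  have hreg (J : Ideal R) (x : R) :
      IsSMulRegular (R ⧸ J) x ↔ ∀ p ∈ associatedPrimes R (R ⧸ J), x ∉ p := by
    simpa [not_iff_comm] using
      (Set.ext_iff.1 (biUnion_associatedPrimes_eq_compl_regular R (R ⧸ J)) x).not.symm
  obtain ⟨f, hfM, hf⟩ := exists_mem_forall_notMem_of_not_le M
    (A := (fun p : Ideal R => p.restrictScalars K) '' ⋃ J ∈ 𝒥, associatedPrimes R (R ⧸ J))
    ((h𝒥.biUnion fun J _ => associatedPrimes.finite R (R ⧸ J)).image _) (by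
      rintro _ ⟨p, hp, rfl⟩ hMp
      obtain ⟨J, hJ, hpJ⟩ := Set.mem_iUnion₂.1 hp
      obtain ⟨x, hx, hxreg⟩ := hM J hJ
      have hJp : J ≤ p := by
        simpa [Submodule.annihilator_top, Ideal.annihilator_quotient] using
          IsAssociatedPrime.annihilator_le hpJ
      have hprime : p.IsPrime := IsAssociatedPrime.isPrime hpJ
      exact (hreg J x).1 hxreg p hpJ
        (hprime.radical_le_iff.2 (sup_le hJp (Ideal.span_le.2 hMp)) hx))
  exact ⟨f, hfM, fun J hJ => (hreg J f).2 fun p hp =>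
    hf _ ⟨p, Set.mem_biUnion hJ hp, rfl⟩⟩

end Avoidance

section Graded

variable {σ R : Type*} [CommRing R] {J : Ideal (MvPolynomial σ R)} {F b : MvPolynomial σ R}
  {d e m s : ℕ}

theorem mem_pow_idealOfVars_of_isHomogeneous (hF : F.IsHomogeneous d) (hed : e ≤ d) :
    F ∈ idealOfVars σ R ^ e :=
  (mem_pow_idealOfVars_iff' _ _).2 fun _ hx => hF.coeff_eq_zero (hx.trans_le hed).ne

theorem pow_idealOfVars_le_iff :
    idealOfVars σ R ^ d ≤ J ↔ ∀ F : MvPolynomial σ R, F.IsHomogeneous d → F ∈ J := by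
  refine ⟨fun h F hF => h (mem_pow_idealOfVars_of_isHomogeneous hF le_rfl), fun h => ?_⟩
  rw [pow_idealOfVars_eq_span, Ideal.span_le]
  rintro _ ⟨x, hx, rfl⟩
  exact h _ (isHomogeneous_monomial 1 hx)

theorem homogeneousComponent_mul_of_isHomogeneous (hb : b.IsHomogeneous d)
    (m : ℕ) (p : MvPolynomial σ R) :
    homogeneousComponent (d + m) (b * p) = b * homogeneousComponent m p := by
  have hdecompose (q : MvPolynomial σ R) (i : ℕ) :
      (DirectSum.decompose (homogeneousSubmodule σ R) q i : MvPolynomial σ R) =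
        homogeneousComponent i q :=
    decomposition.decompose'_apply q i
  simpa only [hdecompose] using DirectSum.coe_decompose_mul_add_of_left_mem
    (homogeneousSubmodule σ R) (b := p) (j := m) hb

theorem isHomogeneous_sup_span_singleton (hJ : J.IsHomogeneous (homogeneousSubmodule σ R))
    (hb : b.IsHomogeneous d) :
    (J ⊔ Ideal.span {b}).IsHomogeneous (homogeneousSubmodule σ R) :=
  hJ.sup (Ideal.homogeneous_span _ _ fun _ hx => ⟨d, by rwa [Set.mem_singleton_iff.1 hx]⟩)

theorem exists_isHomogeneous_sub_mul_mem (hJ : J.IsHomogeneous (homogeneousSubmodule σ R))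
    (hb : b.IsHomogeneous d) (hF : F.IsHomogeneous (d + m)) (hFJ : F ∈ J ⊔ Ideal.span {b}) :
    ∃ g : MvPolynomial σ R, g.IsHomogeneous m ∧ F - b * g ∈ J := by
  obtain ⟨j, hj, _, hp, rfl⟩ := Submodule.mem_sup.1 hFJ
  obtain ⟨p, rfl⟩ := Ideal.mem_span_singleton.1 hp
  refine ⟨homogeneousComponent m p, homogeneousComponent_isHomogeneous m p, ?_⟩
  rw [← homogeneousComponent_mul_of_isHomogeneous hb, ← homogeneousComponent_eq_self hF, map_add,
    add_sub_cancel_right]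
  exact homogeneousComponent_mem_of_mem hJ hj _

theorem exists_isHomogeneous_sub_pow_mul_mem (hJ : J.IsHomogeneous (homogeneousSubmodule σ R))
    (hb : b.IsHomogeneous 1) (hJb : idealOfVars σ R ^ (e + 1) ≤ J ⊔ Ideal.span {b}) (hem : e ≤ m)
    (hF : F.IsHomogeneous (m + s)) :
    ∃ g : MvPolynomial σ R, g.IsHomogeneous m ∧ F - b ^ s * g ∈ J := by
  induction s generalizing F with
  | zero => exact ⟨F, hF, by simp⟩
  | succ s ih =>
    have hFJ : F ∈ J ⊔ Ideal.span {b} :=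
      hJb (mem_pow_idealOfVars_of_isHomogeneous hF (by lia))
    rw [show m + (s + 1) = 1 + (m + s) by ring] at hF
    obtain ⟨p, hp, hpJ⟩ := exists_isHomogeneous_sub_mul_mem hJ hb hF hFJ
    obtain ⟨g, hg, hgJ⟩ := ih hp
    refine ⟨g, hg, ?_⟩
    rw [show F - b ^ (s + 1) * g = F - b * p + b * (p - b ^ s * g) by ring]
    exact J.add_mem hpJ (J.mul_mem_left b hgJ)

/-- Multiplication by `p`, as a map from the forms of degree `m` into the quotient by `J`. -/
def mulQuotient (J : Ideal (MvPolynomial σ R)) (p : MvPolynomial σ R) (m : ℕ) :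
    homogeneousSubmodule σ R m →ₗ[R] MvPolynomial σ R ⧸ J :=
  (Ideal.Quotient.mkₐ R J).toLinearMap ∘ₗ LinearMap.mulLeft R p ∘ₗ Submodule.subtype _

theorem mem_ker_mulQuotient_iff {p : MvPolynomial σ R} {m : ℕ} {g : homogeneousSubmodule σ R m} :
    g ∈ LinearMap.ker (mulQuotient J p m) ↔ p * g ∈ J :=
  Ideal.Quotient.eq_zero_iff_mem

theorem mk_mem_range_mulQuotient_iff {p F : MvPolynomial σ R} {m : ℕ} :
    Ideal.Quotient.mk J F ∈ LinearMap.range (mulQuotient J p m) ↔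
      ∃ g : MvPolynomial σ R, g.IsHomogeneous m ∧ F - p * g ∈ J := by
  simp only [← Ideal.Quotient.eq]
  exact ⟨fun ⟨g, hg⟩ => ⟨g, g.2, hg.symm⟩, fun ⟨g, hg, h⟩ => ⟨⟨g, hg⟩, h.symm⟩⟩

end Graded

section DimensionCount

variable {K : Type*} [Field K]

theorem range_eq_range_of_ker_le_of_range_le {V W : Type*} [AddCommGroup V] [Module K V]
    [FiniteDimensional K V] [AddCommGroup W] [Module K W] {α β : V →ₗ[K] W}
    (hker : LinearMap.ker α ≤ LinearMap.ker β) (hrange : LinearMap.range α ≤ LinearMap.range β) :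
    LinearMap.range α = LinearMap.range β := by
  have hα := α.finrank_range_add_finrank_ker
  have hβ := β.finrank_range_add_finrank_ker
  have hle := Submodule.finrank_mono hker
  exact Submodule.eq_of_le_of_finrank_le hrange (by lia)

theorem pow_idealOfVars_le_sup_span_singleton {σ : Type*} [Finite σ]
    {J : Ideal (MvPolynomial σ K)} {a b : MvPolynomial σ K} {e k : ℕ}
    (hJ : J.IsHomogeneous (homogeneousSubmodule σ K)) (hb : b.IsHomogeneous 1)
    (hJb : idealOfVars σ K ^ (e + 1) ≤ J ⊔ Ideal.span {b}) (ha : a.IsHomogeneous k)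
    (hreg : IsSMulRegular (MvPolynomial σ K ⧸ J) a) :
    idealOfVars σ K ^ (e + k) ≤ J ⊔ Ideal.span {a} := by
  have : FiniteDimensional K (homogeneousSubmodule σ K e) :=
    Module.Finite.iff_fg.2 (homogeneousSubmodule_fg σ K e)
  have hsurj {F : MvPolynomial σ K} (hF : F.IsHomogeneous (e + k)) :
      Ideal.Quotient.mk J F ∈ LinearMap.range (mulQuotient J (b ^ k) e) :=
    mk_mem_range_mulQuotient_iff.2
      (exists_isHomogeneous_sub_pow_mul_mem hJ hb hJb le_rfl hF)
  have hrange :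
      LinearMap.range (mulQuotient J a e) = LinearMap.range (mulQuotient J (b ^ k) e) := by
    apply range_eq_range_of_ker_le_of_range_le
    · intro g hg
      rw [mem_ker_mulQuotient_iff] at hg ⊢
      exact J.mul_mem_left _ ((isSMulRegular_quotient_iff_mem_of_smul_mem J a).1 hreg _ hg)
    · rintro _ ⟨g, rfl⟩
      exact hsurj (add_comm k e ▸ ha.mul g.2)
  refine pow_idealOfVars_le_iff.2 fun F hF => ?_
  obtain ⟨g, -, hg⟩ := mk_mem_range_mulQuotient_iff.1 (hrange ▸ hsurj hF)
  exact Submodule.mem_sup.2 ⟨_, hg, a * g, Ideal.mem_span_singleton.2 ⟨g, rfl⟩,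
    sub_add_cancel _ _⟩

end DimensionCount

section Variables

variable {σ R : Type*} [CommRing R]

theorem ofList_map_X (l : List σ) :
    Ideal.ofList (l.map (X : σ → MvPolynomial σ R)) = Ideal.span (X '' {i | i ∈ l}) := by
  simp only [Ideal.ofList, List.mem_map, Set.image, Set.mem_ofPred_eq]

theorem isSMulRegular_X_quotient_span_X {s : Set σ} {i : σ} (hi : i ∉ s) :
    IsSMulRegular (MvPolynomial σ R ⧸ Ideal.span (X '' s : Set (MvPolynomial σ R)))
      (X i : MvPolynomial σ R) := by
  classical
  simp only [isSMulRegular_quotient_iff_mem_of_smul_mem, smul_eq_mul, mem_ideal_span_X_image,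
    support_X_mul, Finset.forall_mem_map]
  intro p hp x hx
  obtain ⟨t, hts, ht⟩ := hp x hx
  have hit : i ≠ t := by rintro rfl; exact hi hts
  exact ⟨t, hts, by simpa [Finsupp.single_apply, hit] using ht⟩

theorem isWeaklyRegular_map_X {l : List σ} (hl : l.Nodup) :
    IsWeaklyRegular (MvPolynomial σ R ⧸ (⊥ : Ideal (MvPolynomial σ R)))
      (l.map (X : σ → MvPolynomial σ R)) := by
  induction l using List.reverseRecOn with
  | nil => exact .nil _ _
  | append_singleton l i ih =>
    obtain ⟨hl, -, hil⟩ := List.nodup_append.1 hl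
    rw [List.map_append, List.map_singleton, isWeaklyRegular_quotient_concat_iff, bot_sup_eq,
      ofList_map_X]
    refine ⟨ih hl, isSMulRegular_X_quotient_span_X fun hi => ?_⟩
    simpa using hil i hi i

/-- The list `bs` consists of linear forms, is a regular sequence modulo the homogeneous ideal `I`,
and generates, together with `I`, all forms of degree `> e`. Forms of degree `> e` are encoded
by the power `e + 1` of the ideal generated by the variables. -/
structure IsLinearRegularSequence (I : Ideal (MvPolynomial σ R)) (bs : List (MvPolynomial σ R))
    (e : ℕ) : Prop where
  isHomogeneous_ideal : I.IsHomogeneous (homogeneousSubmodule σ R)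
  isHomogeneous_one : ∀ b ∈ bs, b.IsHomogeneous 1
  isWeaklyRegular : IsWeaklyRegular (MvPolynomial σ R ⧸ I) bs
  pow_idealOfVars_le : idealOfVars σ R ^ (e + 1) ≤ I ⊔ Ideal.ofList bs

theorem IsLinearRegularSequence.map_X {l : List σ} (hl : l.Nodup) (hmem : ∀ i, i ∈ l) :
    IsLinearRegularSequence (⊥ : Ideal (MvPolynomial σ R)) (l.map X) 0 where
  isHomogeneous_ideal := Ideal.IsHomogeneous.bot _
  isHomogeneous_one := by
    intro b hb
    obtain ⟨i, -, rfl⟩ := List.mem_map.1 hb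
    exact isHomogeneous_X R i
  isWeaklyRegular := isWeaklyRegular_map_X hl
  pow_idealOfVars_le := by
    rw [bot_sup_eq, ofList_map_X, zero_add, pow_one, idealOfVars]
    exact Ideal.span_mono (by rintro _ ⟨i, rfl⟩; exact ⟨i, hmem i, rfl⟩)

end Variables

section Exchange

variable {σ K : Type*} [Field K] [Finite σ] {I : Ideal (MvPolynomial σ K)}
  {bs : List (MvPolynomial σ K)} {b f : MvPolynomial σ K} {e k : ℕ}

namespace IsLinearRegularSequence

theorem exchange (h : IsLinearRegularSequence I (bs ++ [b]) e)
    (hf : f.IsHomogeneous (k + 1))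
    (hreg : ∀ as, as <+: bs → IsSMulRegular (MvPolynomial σ K ⧸ (I ⊔ Ideal.ofList as)) f) :
    IsLinearRegularSequence (I ⊔ Ideal.span {f}) bs (e + k) where
  isHomogeneous_ideal := isHomogeneous_sup_span_singleton h.isHomogeneous_ideal hf
  isHomogeneous_one := fun b hb => h.isHomogeneous_one b (List.mem_append_left _ hb)
  isWeaklyRegular := isWeaklyRegular_quotient_sup_span_singleton
    ((isWeaklyRegular_quotient_concat_iff _ _ _).1 h.isWeaklyRegular).1 hreg
  pow_idealOfVars_le := by
    have hbs : (I ⊔ Ideal.ofList bs).IsHomogeneous (homogeneousSubmodule σ K) :=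
      h.isHomogeneous_ideal.sup (Ideal.homogeneous_span _ _ fun x hx =>
        ⟨1, h.isHomogeneous_one x (List.mem_append_left _ hx)⟩)
    have hle : idealOfVars σ K ^ (e + 1) ≤ I ⊔ Ideal.ofList bs ⊔ Ideal.span {b} := by
      simpa only [Ideal.ofList_append, Ideal.ofList_singleton, sup_assoc] using
        h.pow_idealOfVars_le
    rw [sup_right_comm, add_assoc]
    exact pow_idealOfVars_le_sup_span_singleton hbs (h.isHomogeneous_one b (by simp)) hle hf
      (hreg bs List.prefix_rfl)

variable [Infinite K] {M : Submodule K (MvPolynomial σ K)}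

theorem exists_exchange (h : IsLinearRegularSequence I (bs ++ [b]) e)
    (hM : ∀ F ∈ M, F.IsHomogeneous (k + 1))
    (hrad : idealOfVars σ K ≤ (I ⊔ Ideal.span M).radical)
    {𝒥 : Set (Ideal (MvPolynomial σ K))} (h𝒥 : 𝒥.Finite)
    (h𝒥reg : ∀ J ∈ 𝒥, ∃ x ∈ (J ⊔ Ideal.span M).radical, IsSMulRegular (MvPolynomial σ K ⧸ J) x) :
    ∃ f ∈ M, (∀ J ∈ 𝒥, IsSMulRegular (MvPolynomial σ K ⧸ J) f) ∧
      IsLinearRegularSequence (I ⊔ Ideal.span {f}) bs (e + k) := by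
  have hinits : {as | as <+: bs}.Finite :=
    bs.inits.finite_toSet.subset fun as has => (List.mem_inits as bs).2 has
  have hregular : ∀ as, as <+: bs → ∃ x ∈ (I ⊔ Ideal.ofList as ⊔ Ideal.span M).radical,
      IsSMulRegular (MvPolynomial σ K ⧸ (I ⊔ Ideal.ofList as)) x := by
    intro as has
    obtain ⟨x, hx, hreg⟩ := exists_mem_isSMulRegular_quotient_sup_ofList h.isWeaklyRegular has
    have hxvars : x ∈ idealOfVars σ K := by
      rw [← pow_one (idealOfVars σ K)]
      exact mem_pow_idealOfVars_of_isHomogeneous (h.isHomogeneous_one x hx) le_rfl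
    exact ⟨x, Ideal.radical_mono (sup_le_sup_right le_sup_left _) (hrad hxvars), hreg⟩
  obtain ⟨f, hfM, hf⟩ := exists_mem_forall_isSMulRegular M
    (h𝒥.union (hinits.image fun as => I ⊔ Ideal.ofList as)) (by
      rintro _ (hJ | ⟨as, has, rfl⟩)
      exacts [h𝒥reg _ hJ, hregular as has])
  exact ⟨f, hfM, fun J hJ => hf J (.inl hJ),
    h.exchange (hM f hfM) fun as has => hf _ (.inr ⟨as, has, rfl⟩)⟩

theorem pow_idealOfVars_le_sup_span (h : IsLinearRegularSequence I bs e)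
    (hM : ∀ F ∈ M, F.IsHomogeneous (k + 1))
    (hrad : idealOfVars σ K ≤ (I ⊔ Ideal.span M).radical) :
    idealOfVars σ K ^ (e + bs.length * k + 1) ≤ I ⊔ Ideal.span M := by
  induction bs using List.reverseRecOn generalizing I e with
  | nil =>
    have hle := h.pow_idealOfVars_le
    rw [Ideal.ofList_nil, sup_bot_eq] at hle
    simpa only [List.length_nil, zero_mul, add_zero] using hle.trans le_sup_left
  | append_singleton bs b ih =>
    obtain ⟨f, hfM, -, hf⟩ := h.exists_exchange hM hrad Set.finite_empty (by simp)
    have hsup : I ⊔ Ideal.span {f} ⊔ Ideal.span M = I ⊔ Ideal.span M := by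
      rw [sup_assoc, sup_eq_right.2 (Ideal.span_mono (Set.singleton_subset_iff.2 hfM))]
    have hle := ih hf (hsup.symm ▸ hrad)
    rwa [hsup, show e + k + bs.length * k = e + (bs ++ [b]).length * k by
      simp only [List.length_append, List.length_singleton]; ring] at hle

end IsLinearRegularSequence

end Exchange

section LinearForm

theorem isSMulRegular_quotient_ker_iff {R A : Type*} [CommRing R] [Ring A] [IsDomain A]
    {φ : R →+* A} {x : R} : IsSMulRegular (R ⧸ RingHom.ker φ) x ↔ φ x ≠ 0 := by
  simp only [isSMulRegular_quotient_iff_mem_of_smul_mem, smul_eq_mul, RingHom.mem_ker, map_mul]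
  refine ⟨fun h hx => ?_, fun hx y hxy => (mul_eq_zero.1 hxy).resolve_left hx⟩
  simpa using h 1 (by rw [hx, zero_mul])

variable {σ K : Type*} [Finite σ] [Nonempty σ] [Field K] [Infinite K]

theorem exists_linearForm_isLinearRegularSequence {T : Set (σ → K)} (hT : T.Finite)
    (hT0 : 0 ∉ T) :
    ∃ (l : MvPolynomial σ K) (bs : List (MvPolynomial σ K)), l.IsHomogeneous 1 ∧
      (∀ v ∈ T, eval v l ≠ 0) ∧ bs.length + 1 = Nat.card σ ∧
      IsLinearRegularSequence (Ideal.span {l}) bs 0 := by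
  have := Fintype.ofFinite σ
  have hX (i : σ) (J : Ideal (MvPolynomial σ K)) :
      X i ∈ (J ⊔ Ideal.span (homogeneousSubmodule σ K 1 : Set (MvPolynomial σ K))).radical :=
    Ideal.le_radical (Ideal.mem_sup_right (Ideal.subset_span (isHomogeneous_X K i)))
  obtain ⟨bs, b, hbs⟩ :=
    (List.eq_nil_or_concat' (Finset.univ.toList.map (X : σ → MvPolynomial σ K))).resolve_left
      (by simp [Finset.univ_nonempty.ne_empty])
  have hvars : IsLinearRegularSequence ⊥ (bs ++ [b]) 0 :=
    hbs ▸ .map_X (Finset.nodup_toList _) (by simp)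
  obtain ⟨l, hl, hlT, hreg⟩ := hvars.exists_exchange
    (M := homogeneousSubmodule σ K 1) (k := 0) (fun F hF => hF)
    (Ideal.span_le.2 (by rintro _ ⟨i, rfl⟩; exact hX i ⊥))
    (hT.image fun v => RingHom.ker (eval v)) (by
      rintro _ ⟨v, hv, rfl⟩
      obtain ⟨i, hi⟩ := Function.ne_iff.1 (ne_of_mem_of_not_mem hv hT0)
      exact ⟨X i, hX i _, isSMulRegular_quotient_ker_iff.2 (by simpa using hi)⟩)
  refine ⟨l, bs, hl, fun v hv => isSMulRegular_quotient_ker_iff.1 (hlT _ ⟨v, hv, rfl⟩), ?_,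
    by simpa using hreg⟩
  simpa using (congrArg List.length hbs).symm

end LinearForm

section Projective

theorem eval_smul_of_isHomogeneous {σ R : Type*} [CommSemiring R] {F : MvPolynomial σ R}
    {d : ℕ} (hF : F.IsHomogeneous d) (a : R) (v : σ → R) : eval (a • v) F = a ^ d * eval v F := by
  rw [eval_eq, eval_eq, Finset.mul_sum]
  refine Finset.sum_congr rfl fun x hx => ?_
  simp only [Pi.smul_apply, smul_eq_mul, mul_pow, Finset.prod_mul_distrib,
    Finset.prod_pow_eq_pow_sum, hF.degree_eq_sum_deg_support hx]
  ring

variable {σ K : Type*} [Field K]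

theorem eval_rep_mk_eq_zero_iff {F : MvPolynomial σ K} {d : ℕ} (hF : F.IsHomogeneous d)
    {v : σ → K} (hv : v ≠ 0) :
    eval (Projectivization.mk K v hv).rep F = 0 ↔ eval v F = 0 := by
  obtain ⟨a, ha⟩ := Projectivization.exists_smul_eq_mk_rep K v hv
  rw [← ha, Units.smul_def, eval_smul_of_isHomogeneous hF, mul_eq_zero,
    or_iff_right (pow_ne_zero d a.ne_zero)]

theorem exists_linearForm_separating {P Q : Projectivization K (σ → K)} (hQP : Q ≠ P) :
    ∃ L : MvPolynomial σ K, L.IsHomogeneous 1 ∧ eval Q.rep L = 0 ∧ eval P.rep L ≠ 0 := by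
  by_contra! h
  have hminor (i j : σ) : Q.rep j * P.rep i = Q.rep i * P.rep j := by
    have hL := h (C (Q.rep j) * X i - C (Q.rep i) * X j)
      ((isHomogeneous_C_mul_X _ _).sub (isHomogeneous_C_mul_X _ _)) (by simp [mul_comm])
    simpa [sub_eq_zero] using hL
  obtain ⟨j, hj⟩ := Function.ne_iff.1 Q.rep_nonzero
  apply hQP
  rw [← Q.mk_rep, ← P.mk_rep, eq_comm, Projectivization.mk_eq_mk_iff']
  refine ⟨P.rep j / Q.rep j, funext fun i => ?_⟩
  rw [Pi.smul_apply, smul_eq_mul, div_mul_eq_mul_div, div_eq_iff hj, mul_comm, ← hminor, mul_comm]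

theorem exists_isHomogeneous_separating {P : Projectivization K (σ → K)}
    {T : Set (Projectivization K (σ → K))} (hT : T.Finite) (hP : P ∉ T) :
    ∃ (s : ℕ) (G : MvPolynomial σ K), G.IsHomogeneous s ∧
      (∀ Q ∈ T, eval Q.rep G = 0) ∧ eval P.rep G ≠ 0 := by
  choose! L hL hLQ hLP using
    fun Q (hQ : Q ∈ T) => exists_linearForm_separating (ne_of_mem_of_not_mem hQ hP)
  refine ⟨_, ∏ Q ∈ hT.toFinset, L Q,
    IsHomogeneous.prod _ _ _ fun Q hQ => hL Q (hT.mem_toFinset.1 hQ), fun Q hQ => ?_, ?_⟩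
  · rw [map_prod]
    exact Finset.prod_eq_zero (hT.mem_toFinset.2 hQ) (hLQ Q hQ)
  · rw [map_prod]
    exact Finset.prod_ne_zero_iff.2 fun Q hQ => hLP Q (hT.mem_toFinset.1 hQ)

theorem idealOfVars_le_radical [IsAlgClosed K] [Finite σ] {I : Ideal (MvPolynomial σ K)}
    (hI : ∀ v, (∀ F ∈ I, eval v F = 0) → v = 0) : idealOfVars σ K ≤ I.radical := by
  rw [← vanishingIdeal_zeroLocus_eq_radical (K := K), idealOfVars, Ideal.span_le]
  rintro _ ⟨i, rfl⟩ v hv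
  simp [hI v fun F hF => by simpa [aeval_eq_eval] using hv F hF]

theorem exists_linearForm_pow_idealOfVars_le [IsAlgClosed K] {n k : ℕ} (hσ : Nat.card σ = n + 1)
    {M : Submodule K (MvPolynomial σ K)} (hM : ∀ F ∈ M, F.IsHomogeneous (k + 1))
    (hfin : {p : Projectivization K (σ → K) | ∀ F ∈ M, eval p.rep F = 0}.Finite) :
    ∃ l : MvPolynomial σ K, l.IsHomogeneous 1 ∧
      (∀ p : Projectivization K (σ → K), (∀ F ∈ M, eval p.rep F = 0) → eval p.rep l ≠ 0) ∧
      idealOfVars σ K ^ (n * k + 1) ≤ Ideal.span M ⊔ Ideal.span {l} := by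
  have : Nonempty σ := (Nat.card_pos_iff.1 (by lia)).1
  have : Finite σ := (Nat.card_pos_iff.1 (by lia)).2
  obtain ⟨l, bs, hl, hlM, hbs, hreg⟩ := exists_linearForm_isLinearRegularSequence
    (hfin.image Projectivization.rep) (by rintro ⟨p, -, hp⟩; exact p.rep_nonzero hp)
  have hlp (p : Projectivization K (σ → K)) (hp : ∀ F ∈ M, eval p.rep F = 0) :
      eval p.rep l ≠ 0 :=
    hlM _ ⟨p, hp, rfl⟩
  have hrad : idealOfVars σ K ≤ (Ideal.span {l} ⊔ Ideal.span M).radical := by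
    refine idealOfVars_le_radical fun v hv => by_contra fun hv0 => ?_
    refine hlp (.mk K v hv0) (fun F hF => ?_) ?_
    · exact (eval_rep_mk_eq_zero_iff (hM F hF) hv0).2
        (hv F (Ideal.mem_sup_right (Ideal.subset_span hF)))
    · exact (eval_rep_mk_eq_zero_iff hl hv0).2
        (hv l (Ideal.mem_sup_left (Ideal.mem_span_singleton_self l)))
  obtain rfl : bs.length = n := by lia
  refine ⟨l, hl, hlp, ?_⟩
  simpa only [zero_add, sup_comm] using hreg.pow_idealOfVars_le_sup_span hM hrad

end Projective

theorem stmt_0_general {K : Type*} [Field K] [IsAlgClosed K] (n k : ℕ)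
    (M : Submodule K (MvPolynomial (Fin (n + 1)) K)) (hM : ∀ F ∈ M, F.IsHomogeneous (k + 1))
    (Λ : Set (Projectivization K (Fin (n + 1) → K)))
    (hΛ : Λ = {p | ∀ F ∈ M, eval p.rep F = 0}) (hfin : Λ.Finite) :
    ∀ P ∈ Λ, ∃ F : MvPolynomial (Fin (n + 1)) K, F.IsHomogeneous (n * k) ∧
      (∀ Q ∈ Λ, Q ≠ P → eval Q.rep F = 0) ∧ eval P.rep F ≠ 0 := by
  subst hΛ
  intro P hP
  obtain ⟨l, hl, hlΛ, hle⟩ := exists_linearForm_pow_idealOfVars_le (Nat.card_fin _) hM hfin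
  obtain ⟨s, G, hG, hGΛ, hGP⟩ := exists_isHomogeneous_separating
    (hfin.sdiff (t := {P})) (Set.notMem_sdiff_of_mem (Set.mem_singleton P))
  have hhom : (l ^ (n * k) * G).IsHomogeneous (n * k + s) := by
    simpa using (hl.pow (n * k)).mul hG
  obtain ⟨F, hF, hFM⟩ := exists_isHomogeneous_sub_pow_mul_mem
    (Ideal.homogeneous_span _ _ fun F hF => ⟨k + 1, hM F hF⟩) hl hle le_rfl hhom
  have heval : ∀ Q ∈ {p : Projectivization K (Fin (n + 1) → K) | ∀ F ∈ M, eval p.rep F = 0},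
      eval Q.rep F = 0 ↔ eval Q.rep G = 0 := by
    intro Q hQ
    have hker : Ideal.span (M : Set _) ≤ RingHom.ker (eval Q.rep) := Ideal.span_le.2 hQ
    have hQF := hker hFM
    rw [RingHom.mem_ker, map_sub, map_mul, map_mul, map_pow, map_pow, sub_eq_zero] at hQF
    have hpow (j : ℕ) : eval Q.rep l ^ j ≠ 0 := pow_ne_zero j (hlΛ Q hQ)
    rw [← mul_eq_zero_iff_left (hpow s), ← hQF, mul_eq_zero_iff_left (hpow _)]
  exact ⟨F, hF, fun Q hQ hQP => (heval Q hQ).2 (hGΛ Q ⟨hQ, hQP⟩), (heval P hP).not.2 hGP⟩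

theorem stmt_0 (n k : ℕ) (hn : 1 ≤ n) (hk : 1 ≤ k)
    (M : Submodule ℂ (MvPolynomial (Fin (n + 1)) ℂ))
    (hM : ∀ F ∈ M, F.IsHomogeneous k)
    (Λ : Set (ProjPt n))
    (hΛ : Λ = {p : ProjPt n | ∀ F ∈ M, VanishesAt F p})
    (hfin : Λ.Finite) :
    ∀ P ∈ Λ, ∃ F : MvPolynomial (Fin (n + 1)) ℂ,
      F.IsHomogeneous (n * (k - 1)) ∧
      (∀ Q ∈ Λ, Q ≠ P → VanishesAt F Q) ∧ ¬ VanishesAt F P := by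
  obtain ⟨k, rfl⟩ := Nat.exists_eq_add_of_le' hk
  exact stmt_0_general n k M hM Λ hΛ hfin
end
end

section
/- Let Σ ⊂ ℙ²(ℂ) be a finite set and let d ≥ 3 be an integer such that 6·|Σ| ≤ d² + 9d + 16 and such that, for every integer t with 1 ≤ 2t ≤ d + 3 and every nonzero homogeneous polynomial C of degree t in ℂ[x_0,x_1,x_2], at most t(d+3−t) − 2 points of Σ lie on the plane curve {C = 0}. Then for every point P ∈ Σ there exists a homogeneous polynomial of degree d in ℂ[x_0,x_1,x_2] that vanishes at every point of Σ \ {P} and does not vanish at P. -/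
open MvPolynomial

noncomputable section

/-!
Suppose no form of degree `d` separates `P` from the rest of `Σ`. Then the evaluations at some
`T ⊆ Σ` containing `P` satisfy a relation `∑ c_p F(p) = 0` for all forms `F` of degree `d`, with
every `c_p ≠ 0`. Pairing forms of degrees `k` and `l` with `k + l ≤ d` through this relation gives
`h_T(k) + h_T(l) ≤ |T|` for the Hilbert function `h_T`. Applied to `k + l = d` with `k` and `l` as
equal as possible, this puts `T` on a curve of degree at most `(d + 1) / 2`, because
`4 |T| < (d + 2) (d + 4)`.

Let `F` be a form of least degree `s` through `T`. It divides every form `G` through `T` of degree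
`j ≤ d + 1 - s`: a common factor of `F` and `G` can be removed at the expense of passing to the
residual points, which again satisfy a full relation in lower degree, and if `F` and `G` are
coprime then Bézout's bound `|T| ≤ s j` contradicts `|T| ≥ h_T(s - 1) + h_T(j - 1) ≥ s (j + 1)`.
So `h_T` is known in the degrees `s - 1` and `d + 1 - s`, and the same inequality gives
`|T| ≥ s (d + 3 - s)`.
-/

open Module
open scoped LinearAlgebra.Projectivization Polynomial

section HomogeneousFactors

variable {σ R : Type*} [CommRing R]

/-- The grading of `R[σ]` as the coaction `X i ↦ X i * T` of the multiplicative group: the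
coefficient of `T ^ k` is the homogeneous component of degree `k`. -/
def gradingHom : MvPolynomial σ R →ₐ[R] (MvPolynomial σ R)[X] :=
  aeval fun i => Polynomial.C (X i) * Polynomial.X

lemma gradingHom_monomial (u : σ →₀ ℕ) (a : R) :
    gradingHom (monomial u a) = Polynomial.monomial u.degree (monomial u a) := by
  rw [gradingHom, aeval_monomial, Finsupp.prod]
  simp only [mul_pow, Finset.prod_mul_distrib, ← Polynomial.C_pow]
  rw [Finset.prod_pow_eq_pow_sum, ← map_prod, ← Polynomial.C_mul_X_pow_eq_monomial,
    Finsupp.degree_apply, ← mul_assoc, monomial_eq, Finsupp.prod, map_mul]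
  rfl

lemma coeff_gradingHom (F : MvPolynomial σ R) (k : ℕ) :
    (gradingHom F).coeff k = homogeneousComponent k F := by
  induction F using MvPolynomial.induction_on' with
  | add p q hp hq => rw [map_add, Polynomial.coeff_add, hp, hq, map_add]
  | monomial u a =>
    rw [gradingHom_monomial, Polynomial.coeff_monomial, homogeneousComponent_of_mem
      ((mem_homogeneousSubmodule _ _).2 (isHomogeneous_monomial a rfl))]
    simp only [eq_comm]

lemma gradingHom_of_isHomogeneous {F : MvPolynomial σ R} {k : ℕ} (hF : F.IsHomogeneous k) :
    gradingHom F = Polynomial.monomial k F := by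
  ext1 i
  rw [coeff_gradingHom, Polynomial.coeff_monomial,
    homogeneousComponent_of_mem ((mem_homogeneousSubmodule _ _).2 hF)]
  simp only [eq_comm]

lemma isHomogeneous_of_coeff_gradingHom_eq_zero {F : MvPolynomial σ R} {k : ℕ}
    (h : ∀ i ≠ k, (gradingHom F).coeff i = 0) : F.IsHomogeneous k := by
  rw [← sum_homogeneousComponent F]
  refine IsHomogeneous.sum _ _ _ fun i _ => ?_
  obtain rfl | hi := eq_or_ne i k
  · exact homogeneousComponent_isHomogeneous _ _
  · rw [← coeff_gradingHom, h i hi]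
    exact isHomogeneous_zero _ _ _

variable [IsDomain R]

lemma natTrailingDegree_eq_natDegree_of_mul_eq_monomial {p q : R[X]} {n : ℕ} {r : R}
    (hr : r ≠ 0) (h : p * q = Polynomial.monomial n r) : p.natTrailingDegree = p.natDegree := by
  have hpq : p * q ≠ 0 := by rwa [h, Ne, Polynomial.monomial_eq_zero_iff]
  have hp := left_ne_zero_of_mul hpq
  have hq := right_ne_zero_of_mul hpq
  have hdeg : p.natDegree + q.natDegree = n := by
    rw [← Polynomial.natDegree_mul hp hq, h, Polynomial.natDegree_monomial_eq _ hr]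
  have htrail : p.natTrailingDegree + q.natTrailingDegree = n := by
    rw [← Polynomial.natTrailingDegree_mul hp hq, h, Polynomial.natTrailingDegree_monomial hr]
  have := Polynomial.natTrailingDegree_le_natDegree p
  have := Polynomial.natTrailingDegree_le_natDegree q
  omega

theorem exists_isHomogeneous_of_dvd {A F : MvPolynomial σ R} {n : ℕ} (hF : F.IsHomogeneous n)
    (hF0 : F ≠ 0) (hA : A ∣ F) : ∃ a, A.IsHomogeneous a := by
  obtain ⟨B, rfl⟩ := hA
  have hmul := gradingHom_of_isHomogeneous hF
  rw [map_mul] at hmul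
  have hdeg := natTrailingDegree_eq_natDegree_of_mul_eq_monomial hF0 hmul
  refine ⟨_, isHomogeneous_of_coeff_gradingHom_eq_zero (k := (gradingHom A).natDegree)
    fun i hi => ?_⟩
  obtain hlt | hgt := lt_or_gt_of_ne hi
  · exact Polynomial.coeff_eq_zero_of_lt_natTrailingDegree (hdeg ▸ hlt)
  · exact Polynomial.coeff_eq_zero_of_natDegree_lt hgt

theorem exists_isHomogeneous_cofactor {A B : MvPolynomial σ R} {a n : ℕ}
    (hA : A.IsHomogeneous a) (hAB : (A * B).IsHomogeneous n) (h0 : A * B ≠ 0) :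
    ∃ b, a + b = n ∧ B.IsHomogeneous b := by
  obtain ⟨b, hB⟩ := exists_isHomogeneous_of_dvd hAB h0 (dvd_mul_left B A)
  exact ⟨b, (hA.mul hB).inj_right hAB h0, hB⟩

end HomogeneousFactors

lemma isUnit_of_isHomogeneous_zero {σ K : Type*} [Field K] {F : MvPolynomial σ K}
    (hF : F.IsHomogeneous 0) (hF0 : F ≠ 0) : IsUnit F := by
  have hC : F = C (coeff 0 F) :=
    totalDegree_eq_zero_iff_eq_C.1 ((totalDegree_zero_iff_isHomogeneous _).2 hF)
  rw [hC]
  refine (isUnit_iff_ne_zero.2 fun h => hF0 ?_).map C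
  rw [hC, h, map_zero]

section Dimension

theorem finrank_homogeneousSubmodule (σ R : Type*) [Fintype σ] [CommRing R] [Nontrivial R]
    (k : ℕ) : finrank R (homogeneousSubmodule σ R k) = (Fintype.card σ + k - 1).choose k := by
  classical
  have hs : {u : σ →₀ ℕ | u.degree = k} =
      (Finset.finsuppAntidiag (Finset.univ : Finset σ) k : Set (σ →₀ ℕ)) := by
    ext u
    simp [Finset.mem_finsuppAntidiag, Finsupp.degree_eq_sum]
  rw [homogeneousSubmodule_eq_finsupp_supported,
    (AddMonoidAlgebra.supportedEquivFinsupp (S := R) (R := R) _).finrank_eq, hs,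
    finrank_finsupp_self]
  simp only [Finset.coe_sort_coe, Fintype.card_coe]
  rw [Finset.card_finsuppAntidiag_nat_eq_choose, Finset.card_univ]

lemma two_mul_finrank_homogeneousSubmodule_fin_three (K : Type*) [Field K] (k : ℕ) :
    2 * finrank K (homogeneousSubmodule (Fin 3) K k) = (k + 1) * (k + 2) := by
  rw [finrank_homogeneousSubmodule, Fintype.card_fin, show 3 + k - 1 = k + 2 by omega,
    Nat.choose_symm_add, Nat.choose_two_right,
    Nat.mul_div_cancel' (Nat.even_mul_pred_self _).two_dvd, Nat.add_succ_sub_one, mul_comm]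

instance finiteDimensional_homogeneousSubmodule (σ K : Type*) [Finite σ] [Field K] (k : ℕ) :
    FiniteDimensional K (homogeneousSubmodule σ K k) :=
  Module.Finite.of_fg (homogeneousSubmodule_fg σ K k)

theorem finrank_add_finrank_le_card_of_sum_mul_eq_zero {ι K : Type*} [Fintype ι] [Field K]
    {c : ι → K} (hc : ∀ i, c i ≠ 0) {V W : Submodule K (ι → K)}
    (h : ∀ v ∈ V, ∀ w ∈ W, ∑ i, c i * (v i * w i) = 0) :
    finrank K V + finrank K W ≤ Fintype.card ι := by
  let φ : (ι → K) →ₗ[K] Dual K (ι → K) :=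
    (Module.piEquiv ι K K).toLinearMap ∘ₗ LinearMap.mulLeft K c
  have hφ : Function.Injective φ := by
    refine (Module.piEquiv ι K K).injective.comp fun v w hvw => funext fun i => ?_
    exact mul_left_cancel₀ (hc i) (congrFun hvw i)
  have hV : V.map φ ≤ W.dualAnnihilator := by
    rintro _ ⟨v, hv, rfl⟩
    rw [Submodule.mem_dualAnnihilator]
    intro w hw
    rw [← h v hv w hw]
    simp only [φ, LinearMap.comp_apply, LinearEquiv.coe_coe, Module.piEquiv_apply_apply,
      LinearMap.mulLeft_apply, Pi.mul_apply, smul_eq_mul]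
    exact Finset.sum_congr rfl fun i _ => by ring
  have hle := Submodule.finrank_mono hV
  rw [← (Submodule.equivMapOfInjective φ hφ V).finrank_eq] at hle
  have hW := Subspace.finrank_add_finrank_dualAnnihilator_eq W
  rw [Module.finrank_pi] at hW
  omega

end Dimension

section Multiples

variable {σ K : Type*} [Field K] {F G : MvPolynomial σ K}

/-- The space of products `F * H` with `H` a form of degree `k`, that is, the part of degree
`deg F + k` of the ideal generated by a form `F`. -/
def multiples (F : MvPolynomial σ K) (k : ℕ) : Submodule K (MvPolynomial σ K) :=
  (homogeneousSubmodule σ K k).map (LinearMap.mulLeft K F)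

lemma mem_multiples {k : ℕ} : G ∈ multiples F k ↔ ∃ H, H.IsHomogeneous k ∧ F * H = G :=
  Iff.rfl

lemma finrank_multiples (hF : F ≠ 0) (k : ℕ) :
    finrank K (multiples F k) = finrank K (homogeneousSubmodule σ K k) :=
  (Submodule.equivMapOfInjective _ (mul_right_injective₀ hF) _).finrank_eq.symm

instance [Finite σ] (k : ℕ) : FiniteDimensional K (multiples F k) :=
  Module.Finite.map _ _

lemma mem_multiples_of_dvd {s k : ℕ} (hF : F.IsHomogeneous s) (hG : G.IsHomogeneous (s + k))
    (h : F ∣ G) : G ∈ multiples F k := by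
  obtain ⟨H, rfl⟩ := h
  obtain h0 | h0 := eq_or_ne (F * H) 0
  · exact h0 ▸ Submodule.zero_mem _
  · obtain ⟨l, hl, hH⟩ := exists_isHomogeneous_cofactor hF hG h0
    obtain rfl := Nat.add_left_cancel hl
    exact ⟨H, hH, rfl⟩

lemma multiples_inf_multiples_le {b m l : ℕ} (hG : G.IsHomogeneous b) (hFG : IsRelPrime F G) :
    multiples F (b + m) ⊓ multiples G l ≤ multiples (F * G) m := by
  rintro _ ⟨⟨H, hH, rfl⟩, ⟨H', -, hHH'⟩⟩
  have hdvd : G ∣ H := hFG.symm.dvd_of_dvd_mul_left ⟨H', hHH'.symm⟩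
  obtain ⟨M, hM, rfl⟩ := mem_multiples.1 (mem_multiples_of_dvd hG hH hdvd)
  exact ⟨M, hM, mul_assoc F G M⟩

end Multiples

section Evaluation

variable {σ K : Type*} [Field K] {F G : MvPolynomial σ K} {T : Finset (ℙ K (σ → K))}

/-- Evaluation of polynomials at the chosen representatives of the points of `T`. -/
def evalOn (T : Finset (ℙ K (σ → K))) : MvPolynomial σ K →ₗ[K] (T → K) :=
  LinearMap.pi fun p => (aeval p.1.rep).toLinearMap

lemma evalOn_apply (F : MvPolynomial σ K) (p : T) : evalOn T F p = eval p.1.rep F := by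
  rw [← aeval_eq_eval]
  rfl

/-- The forms of degree `k` through `T`: the part of degree `k` of the homogeneous ideal of `T`. -/
def vanishingForms (T : Finset (ℙ K (σ → K))) (k : ℕ) : Submodule K (MvPolynomial σ K) :=
  homogeneousSubmodule σ K k ⊓ LinearMap.ker (evalOn T)

lemma mem_vanishingForms {k : ℕ} :
    F ∈ vanishingForms T k ↔ F.IsHomogeneous k ∧ ∀ p ∈ T, eval p.rep F = 0 := by
  simp [vanishingForms, funext_iff, evalOn_apply]

lemma multiples_le_vanishingForms {a k : ℕ} (hF : F ∈ vanishingForms T a) :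
    multiples F k ≤ vanishingForms T (a + k) := by
  rintro _ ⟨H, hH, rfl⟩
  rw [mem_vanishingForms] at hF ⊢
  exact ⟨hF.1.mul hH, fun p hp => by simp [hF.2 p hp]⟩

instance [Finite σ] (k : ℕ) : FiniteDimensional K (vanishingForms T k) :=
  Submodule.finiteDimensional_inf_left _ _

/-- The Hilbert function of `T`: the number of independent conditions imposed by `T` on forms of
degree `k`. -/
def hilbertFunction (T : Finset (ℙ K (σ → K))) (k : ℕ) : ℕ :=
  finrank K ((homogeneousSubmodule σ K k).map (evalOn T))

theorem hilbertFunction_add_finrank_vanishingForms [Finite σ] (T : Finset (ℙ K (σ → K)))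
    (k : ℕ) : hilbertFunction T k + finrank K (vanishingForms T k) =
      finrank K (homogeneousSubmodule σ K k) := by
  have h := LinearMap.finrank_range_add_finrank_ker
    ((evalOn T).domRestrict (homogeneousSubmodule σ K k))
  rwa [LinearMap.range_domRestrict, LinearMap.ker_domRestrict, ← Submodule.finrank_map_subtype_eq,
    Submodule.map_comap_subtype] at h

lemma not_isUnit_of_mem_vanishingForms {k : ℕ} (hT : T.Nonempty) (hF : F ∈ vanishingForms T k) :
    ¬IsUnit F := by
  obtain ⟨p, hp⟩ := hT
  intro hu
  exact (hu.map (eval p.rep)).ne_zero ((mem_vanishingForms.1 hF).2 p hp)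

lemma pos_of_mem_vanishingForms {k : ℕ} (hT : T.Nonempty) (hF : F ∈ vanishingForms T k)
    (hF0 : F ≠ 0) : 0 < k := by
  refine Nat.pos_of_ne_zero ?_
  rintro rfl
  exact not_isUnit_of_mem_vanishingForms hT hF
    (isUnit_of_isHomogeneous_zero (mem_vanishingForms.1 hF).1 hF0)

end Evaluation

section Separation

variable {σ K : Type*} [Finite σ] [Field K]

lemma exists_isHomogeneous_one_eval_eq (f : Dual K (σ → K)) :
    ∃ L : MvPolynomial σ K, L.IsHomogeneous 1 ∧ ∀ v, eval v L = f v := by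
  classical
  cases nonempty_fintype σ
  refine ⟨∑ i, C (f (Pi.single i 1)) * X i,
    IsHomogeneous.sum _ _ _ fun i _ => isHomogeneous_C_mul_X _ i, fun v => ?_⟩
  conv_rhs => rw [pi_eq_sum_univ' v, map_sum]
  simp [mul_comm]

lemma exists_linear_form_separating {P Q : ℙ K (σ → K)} (hPQ : Q ≠ P) :
    ∃ L : MvPolynomial σ K, L.IsHomogeneous 1 ∧ eval P.rep L ≠ 0 ∧ eval Q.rep L = 0 := by
  have hspan : P.rep ∉ Submodule.span K {Q.rep} := by
    rw [Submodule.mem_span_singleton]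
    rintro ⟨a, ha⟩
    apply hPQ
    rw [← P.mk_rep, ← Q.mk_rep, eq_comm, Projectivization.mk_eq_mk_iff']
    exact ⟨a, ha⟩
  obtain ⟨f, hP, hQ⟩ := Submodule.exists_le_ker_of_notMem hspan
  obtain ⟨L, hL, heval⟩ := exists_isHomogeneous_one_eval_eq f
  exact ⟨L, hL, heval P.rep ▸ hP,
    (heval Q.rep).trans (hQ (Submodule.mem_span_singleton_self _))⟩

lemma exists_linear_form_forall_eval_ne_zero [Infinite K] (T : Finset (ℙ K (σ → K))) :
    ∃ L : MvPolynomial σ K, L.IsHomogeneous 1 ∧ ∀ p ∈ T, eval p.rep L ≠ 0 := by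
  obtain ⟨f, hf⟩ := Module.exists_dual_forall_apply_ne_zero (K := K)
    (fun p : T => p.1.rep) (fun p => p.1.rep_nonzero)
  obtain ⟨L, hL, heval⟩ := exists_isHomogeneous_one_eval_eq f
  exact ⟨L, hL, fun p hp => heval p.rep ▸ hf ⟨p, hp⟩⟩

lemma exists_mem_vanishingForms_eval_ne_zero {T : Finset (ℙ K (σ → K))} {P : ℙ K (σ → K)}
    (hP : P ∉ T) {n : ℕ} (hn : T.card ≤ n) :
    ∃ F ∈ vanishingForms T n, eval P.rep F ≠ 0 := by
  have hsep : ∀ Q ∈ T, ∃ L : MvPolynomial σ K,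
      L.IsHomogeneous 1 ∧ eval P.rep L ≠ 0 ∧ eval Q.rep L = 0 :=
    fun Q hQ => exists_linear_form_separating (ne_of_mem_of_not_mem hQ hP)
  choose! L hL hLP hLQ using hsep
  obtain ⟨f, hf⟩ := Module.Projective.exists_dual_ne_zero K P.rep_nonzero
  obtain ⟨M, hM, heval⟩ := exists_isHomogeneous_one_eval_eq f
  refine ⟨(∏ Q ∈ T, L Q) * M ^ (n - T.card), mem_vanishingForms.2 ⟨?_, fun Q hQ => ?_⟩, ?_⟩
  · convert (IsHomogeneous.prod T L (fun _ => 1) hL).mul (hM.pow (n - T.card)) using 1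
    simp [hn]
  · rw [map_mul, map_prod, Finset.prod_eq_zero hQ (hLQ Q hQ), zero_mul]
  · rw [map_mul, map_prod, map_pow, heval]
    exact mul_ne_zero (Finset.prod_ne_zero_iff.2 hLP) (pow_ne_zero _ hf)

theorem hilbertFunction_eq_card {T : Finset (ℙ K (σ → K))} {n : ℕ} (hn : T.card ≤ n) :
    hilbertFunction T n = T.card := by
  classical
  have hsep (P : ℙ K (σ → K)) : ∃ F ∈ vanishingForms (T.erase P) n, eval P.rep F ≠ 0 :=
    exists_mem_vanishingForms_eval_ne_zero (Finset.notMem_erase P T)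
      ((Finset.card_erase_le).trans hn)
  choose F hF hFP using hsep
  have htop : (homogeneousSubmodule σ K n).map (evalOn T) = ⊤ := by
    refine eq_top_iff.2 fun x _ => ⟨∑ p : T, C (x p / eval p.1.rep (F p)) * F p, ?_, ?_⟩
    · exact IsHomogeneous.sum _ _ _ fun p _ => (mem_vanishingForms.1 (hF p)).1.C_mul _
    · ext q
      rw [evalOn_apply, map_sum, Finset.sum_eq_single q]
      · simp [hFP]
      · intro p _ hpq
        have hq : q.1 ∈ T.erase p.1 :=
          Finset.mem_erase.2 ⟨fun h => hpq (Subtype.ext h.symm), q.2⟩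
        rw [map_mul, (mem_vanishingForms.1 (hF p)).2 q hq, mul_zero]
      · simp
  rw [hilbertFunction, htop, finrank_top, Module.finrank_pi, Fintype.card_coe]

end Separation

section FullRelation

variable {σ K : Type*} [Field K] {T : Finset (ℙ K (σ → K))}

/-- The evaluations of degree `n` forms at the points of `T` satisfy a linear relation in which
every coefficient is nonzero. Such sets are the supports of the relations witnessing that a
larger set fails to impose independent conditions on forms of degree `n`. -/
def HasFullRelation (T : Finset (ℙ K (σ → K))) (n : ℕ) : Prop :=
  ∃ c : ℙ K (σ → K) → K, (∀ p ∈ T, c p ≠ 0) ∧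
    ∀ F : MvPolynomial σ K, F.IsHomogeneous n → ∑ p ∈ T, c p * eval p.rep F = 0

theorem exists_hasFullRelation_of_not_separated {P : ℙ K (σ → K)} (hP : P ∈ T) {n : ℕ}
    (h : ∀ F : MvPolynomial σ K, F.IsHomogeneous n → (∀ Q ∈ T, Q ≠ P → eval Q.rep F = 0) →
      eval P.rep F = 0) :
    ∃ U ⊆ T, P ∈ U ∧ HasFullRelation U n := by
  classical
  have hnot : (Pi.single ⟨P, hP⟩ 1 : T → K) ∉ (homogeneousSubmodule σ K n).map (evalOn T) := by
    rintro ⟨F, hF, hFP⟩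
    have heval (Q : T) : eval Q.1.rep F = (Pi.single ⟨P, hP⟩ 1 : T → K) Q := by
      rw [← hFP, evalOn_apply]
    refine one_ne_zero (α := K) ?_
    rw [← h F hF fun Q hQ hQP => ?_, heval ⟨P, hP⟩, Pi.single_eq_same]
    rw [heval ⟨Q, hQ⟩, Pi.single_eq_of_ne fun hQP' => hQP (congrArg Subtype.val hQP')]
  obtain ⟨f, hfP, hf⟩ := Submodule.exists_le_ker_of_notMem hnot
  let c (p : ℙ K (σ → K)) : K := if hp : p ∈ T then f (Pi.single ⟨p, hp⟩ 1) else 0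
  have hc (p : T) : c p = f (Pi.single p 1) := dif_pos p.2
  refine ⟨T.filter (c · ≠ 0), Finset.filter_subset _ _,
    Finset.mem_filter.2 ⟨hP, (hc ⟨P, hP⟩).trans_ne hfP⟩, c,
    fun p hp => (Finset.mem_filter.1 hp).2, fun F hF => ?_⟩
  calc ∑ p ∈ T with c p ≠ 0, c p * eval p.rep F
      = ∑ p ∈ T, c p * eval p.rep F :=
        Finset.sum_filter_of_ne fun p _ => left_ne_zero_of_mul
    _ = ∑ p : T, evalOn T F p • f (Pi.single p 1) := by
        rw [← Finset.sum_coe_sort]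
        exact Finset.sum_congr rfl fun p _ => by rw [hc, evalOn_apply, smul_eq_mul, mul_comm]
    _ = f (evalOn T F) := by
        conv_rhs => rw [pi_eq_sum_univ' (evalOn T F), map_sum]
        simp only [map_smul]
    _ = 0 := hf ⟨F, hF, rfl⟩

lemma HasFullRelation.residual [DecidableEq K] {n e : ℕ} (h : HasFullRelation T (e + n))
    {D : MvPolynomial σ K} (hD : D.IsHomogeneous e) :
    HasFullRelation (T.filter (eval ·.rep D ≠ 0)) n := by
  obtain ⟨c, hc, hsum⟩ := h
  refine ⟨fun p => c p * eval p.rep D, fun p hp => ?_, fun F hF => ?_⟩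
  · rw [Finset.mem_filter] at hp
    exact mul_ne_zero (hc p hp.1) hp.2
  · rw [Finset.sum_filter_of_ne
      fun p _ hp => right_ne_zero_of_mul (left_ne_zero_of_mul hp), ← hsum _ (hD.mul hF)]
    simp only [map_mul, mul_assoc]

variable [Finite σ] [Infinite K]

lemma HasFullRelation.mono {n k : ℕ} (h : HasFullRelation T n) (hk : k ≤ n) :
    HasFullRelation T k := by
  classical
  obtain ⟨L, hL, hLT⟩ := exists_linear_form_forall_eval_ne_zero T
  have hpow : (L ^ (n - k)).IsHomogeneous (n - k) := by simpa using hL.pow (n - k)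
  have hres := HasFullRelation.residual (n := k) (by rwa [Nat.sub_add_cancel hk]) hpow
  rwa [Finset.filter_true_of_mem fun p hp => by
    rw [map_pow]
    exact pow_ne_zero _ (hLT p hp)] at hres

theorem HasFullRelation.hilbertFunction_add_le {n k l : ℕ} (h : HasFullRelation T n)
    (hkl : k + l ≤ n) : hilbertFunction T k + hilbertFunction T l ≤ T.card := by
  obtain ⟨c, hc, hsum⟩ := h.mono hkl
  rw [← Fintype.card_coe T]
  refine finrank_add_finrank_le_card_of_sum_mul_eq_zero (c := fun p : T => c p)
    (fun p => hc p p.2) ?_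
  rintro _ ⟨A, hA, rfl⟩ _ ⟨B, hB, rfl⟩
  simp only [evalOn_apply, ← map_mul]
  rw [Finset.sum_coe_sort T fun p => c p * eval p.rep (A * B)]
  exact hsum _ (IsHomogeneous.mul hA hB)

end FullRelation

section PlaneCurves

variable {K : Type*} [Field K] {T : Finset (ℙ K (Fin 3 → K))} {F G : MvPolynomial (Fin 3) K}

theorem card_le_mul_of_isRelPrime {a b : ℕ} (hF0 : F ≠ 0) (hG0 : G ≠ 0)
    (hF : F ∈ vanishingForms T a) (hG : G ∈ vanishingForms T b) (hFG : IsRelPrime F G) :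
    T.card ≤ a * b := by
  set m := T.card with hm
  have hsup : multiples F (b + m) ⊔ multiples G (a + m) ≤ vanishingForms T (a + b + m) := by
    rw [sup_le_iff]
    exact ⟨(multiples_le_vanishingForms hF).trans_eq (by rw [add_assoc]),
      (multiples_le_vanishingForms hG).trans_eq (by rw [add_left_comm, add_assoc])⟩
  have hinf : multiples F (b + m) ⊓ multiples G (a + m) ≤ multiples (F * G) m :=
    multiples_inf_multiples_le (mem_vanishingForms.1 hG).1 hFG
  have hdim := Submodule.finrank_sup_add_finrank_inf_eq (multiples F (b + m)) (multiples G (a + m))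
  have hrank := hilbertFunction_add_finrank_vanishingForms T (a + b + m)
  rw [hilbertFunction_eq_card (hm ▸ Nat.le_add_left _ _), ← hm] at hrank
  replace hsup := Submodule.finrank_mono hsup
  replace hinf := Submodule.finrank_mono hinf
  rw [finrank_multiples hF0, finrank_multiples hG0] at hdim
  rw [finrank_multiples (mul_ne_zero hF0 hG0)] at hinf
  have := two_mul_finrank_homogeneousSubmodule_fin_three K (a + b + m)
  have := two_mul_finrank_homogeneousSubmodule_fin_three K (b + m)
  have := two_mul_finrank_homogeneousSubmodule_fin_three K (a + m)
  have := two_mul_finrank_homogeneousSubmodule_fin_three K m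
  nlinarith

-- If `k < s` the truncated difference `k + 1 - s` is `0`, as it should be: no form of degree `k`
-- other than `0` is divisible by `F`.
lemma le_two_mul_hilbertFunction_of_forall_dvd {s k : ℕ} (hF0 : F ≠ 0) (hF : F.IsHomogeneous s)
    (h : ∀ G ∈ vanishingForms T k, F ∣ G) :
    (k + 1) * (k + 2) ≤ 2 * hilbertFunction T k + (k + 1 - s) * (k + 2 - s) := by
  rw [← two_mul_finrank_homogeneousSubmodule_fin_three K,
    ← hilbertFunction_add_finrank_vanishingForms T k, mul_add]
  refine Nat.add_le_add_left ?_ _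
  obtain hks | ⟨l, rfl⟩ : k < s ∨ ∃ l, k = s + l := by
    obtain hks | hsk := lt_or_ge k s
    exacts [.inl hks, .inr (Nat.exists_eq_add_of_le hsk)]
  · have hbot : vanishingForms T k = ⊥ := by
      refine (Submodule.eq_bot_iff _).2 fun G hG => by_contra fun hG0 => ?_
      obtain ⟨H, rfl⟩ := h G hG
      obtain ⟨l, hl, -⟩ := exists_isHomogeneous_cofactor hF (mem_vanishingForms.1 hG).1 hG0
      omega
    rw [hbot, finrank_bot]
    exact Nat.zero_le _
  · have hle : vanishingForms T (s + l) ≤ multiples F l := fun G hG =>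
      mem_multiples_of_dvd hF (mem_vanishingForms.1 hG).1 (h G hG)
    have := Submodule.finrank_mono hle
    rw [finrank_multiples hF0] at this
    rw [show s + l + 1 - s = l + 1 by omega, show s + l + 2 - s = l + 2 by omega,
      ← two_mul_finrank_homogeneousSubmodule_fin_three K]
    omega

/-- `F` is a nonzero form through `T` of least degree `s`. -/
structure IsMinimalForm (F : MvPolynomial (Fin 3) K) (s : ℕ) (T : Finset (ℙ K (Fin 3 → K))) :
    Prop where
  ne_zero : F ≠ 0
  mem : F ∈ vanishingForms T s
  eq_bot : ∀ t < s, vanishingForms T t = ⊥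

lemma IsMinimalForm.le_degree {s t : ℕ} (hF : IsMinimalForm F s T) (hG : G ∈ vanishingForms T t)
    (hG0 : G ≠ 0) : s ≤ t :=
  not_lt.1 fun hts => hG0 ((Submodule.mem_bot K).1 (hF.eq_bot t hts ▸ hG))

lemma exists_isMinimalForm {k : ℕ} (hk : vanishingForms T k ≠ ⊥) :
    ∃ s ≤ k, ∃ F, IsMinimalForm F s T := by
  classical
  have hex : ∃ s, vanishingForms T s ≠ ⊥ := ⟨k, hk⟩
  obtain ⟨F, hF, hF0⟩ := Submodule.exists_mem_ne_zero_of_ne_bot (Nat.find_spec hex)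
  exact ⟨Nat.find hex, Nat.find_min' hex hk, F, hF0, hF,
    fun t ht => not_not.1 (Nat.find_min hex ht)⟩

/-- Coprime curves through a nonempty set with a full relation in degree `n` have degrees adding
up to at least `n + 2`. -/
def CoprimeDegreeBound (K : Type*) [Field K] (n : ℕ) : Prop :=
  ∀ ⦃T : Finset (ℙ K (Fin 3 → K))⦄, T.Nonempty → HasFullRelation T n →
    ∀ ⦃a b : ℕ⦄, ∀ F ∈ vanishingForms T a, ∀ G ∈ vanishingForms T b, IsRelPrime F G →
      n + 2 ≤ a + b

-- The common factor `D` is removed by passing to the points of `T` off the curve `D = 0`.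
lemma IsMinimalForm.not_isRelPrime_cofactors {n s j e : ℕ} {D : MvPolynomial (Fin 3) K}
    (ih : ∀ m < n, CoprimeDegreeBound K m) (hT : HasFullRelation T n)
    (hF : IsMinimalForm (D * F) s T) (hG : D * G ∈ vanishingForms T j) (hG0 : D * G ≠ 0)
    (hD : D.IsHomogeneous e) (he : 0 < e) (hes : e < s) (hn : s + j ≤ n + 1) :
    ¬IsRelPrime F G := by
  classical
  intro hFG
  have hFT := mem_vanishingForms.1 hF.mem
  have hGT := mem_vanishingForms.1 hG
  obtain ⟨f, rfl, hFf⟩ := exists_isHomogeneous_cofactor hD hFT.1 hF.ne_zero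
  obtain ⟨g, rfl, hGg⟩ := exists_isHomogeneous_cofactor hD hGT.1 hG0
  obtain ⟨m, rfl⟩ : ∃ m, n = e + m := Nat.exists_eq_add_of_le (by omega)
  set U := T.filter (eval ·.rep D ≠ 0) with hU
  have hUne : U.Nonempty := by
    rw [hU, Finset.filter_nonempty_iff]
    by_contra! hcon
    have hDT : D ∈ vanishingForms T e := mem_vanishingForms.2 ⟨hD, hcon⟩
    exact hes.not_ge (hF.le_degree hDT (left_ne_zero_of_mul hG0))
  have hcofactor {A : MvPolynomial (Fin 3) K} (hA : ∀ p ∈ T, eval p.rep (D * A) = 0) :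
      ∀ p ∈ U, eval p.rep A = 0 := by
    intro p hp
    rw [hU, Finset.mem_filter] at hp
    exact (mul_eq_zero.1 ((map_mul _ _ _).symm.trans (hA p hp.1))).resolve_left hp.2
  have hbound := ih m (by omega) hUne (hT.residual hD)
    F (mem_vanishingForms.2 ⟨hFf, hcofactor hFT.2⟩) G (mem_vanishingForms.2 ⟨hGg, hcofactor hGT.2⟩)
    hFG
  omega

end PlaneCurves

section CayleyBacharach

variable {K : Type*} [Field K] [Infinite K] {T : Finset (ℙ K (Fin 3 → K))}
  {F G : MvPolynomial (Fin 3) K}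

lemma IsMinimalForm.mul_le_card {n s k : ℕ} (hF : IsMinimalForm F s T)
    (hT : HasFullRelation T n) (hsk : s ≤ k + 1) (hn : s + k ≤ n + 1)
    (h : ∀ G ∈ vanishingForms T k, F ∣ G) : s * (k + 2) ≤ T.card := by
  obtain _ | a := s
  · simp
  obtain ⟨b, rfl⟩ : ∃ b, k = a + b := Nat.exists_eq_add_of_le (by omega)
  have hhom := (mem_vanishingForms.1 hF.mem).1
  have hcard := hT.hilbertFunction_add_le (k := a) (l := a + b) (by omega)
  have hlow := le_two_mul_hilbertFunction_of_forall_dvd (k := a) hF.ne_zero hhom fun G hG => by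
    rw [hF.eq_bot a a.lt_succ_self, Submodule.mem_bot] at hG
    exact hG ▸ dvd_zero F
  have hhigh := le_two_mul_hilbertFunction_of_forall_dvd hF.ne_zero hhom h
  rw [show a + 1 - (a + 1) = 0 by omega] at hlow
  rw [show a + b + 1 - (a + 1) = b by omega, show a + b + 2 - (a + 1) = b + 1 by omega] at hhigh
  nlinarith

lemma IsMinimalForm.dvd_of_coprimeDegreeBound {n s : ℕ} (ih : ∀ m < n, CoprimeDegreeBound K m)
    (hTne : T.Nonempty) (hT : HasFullRelation T n) (hF : IsMinimalForm F s T) {j : ℕ}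
    (hj : s + j ≤ n + 1) (hG : G ∈ vanishingForms T j) : F ∣ G := by
  have hs := pos_of_mem_vanishingForms hTne hF.mem hF.ne_zero
  induction j generalizing G with
  | zero =>
    rw [hF.eq_bot 0 hs, Submodule.mem_bot] at hG
    exact hG ▸ dvd_zero F
  | succ j ihj =>
    by_contra hdvd
    have hG0 : G ≠ 0 := fun h => hdvd (h ▸ dvd_zero F)
    obtain ⟨F', G', D, hrel, rfl, rfl⟩ :=
      UniqueFactorizationMonoid.exists_reduced_factors F hF.ne_zero G
    have hFs := (mem_vanishingForms.1 hF.mem).1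
    obtain ⟨e, hD⟩ := exists_isHomogeneous_of_dvd hFs hF.ne_zero (dvd_mul_right D F')
    obtain ⟨f, hef, hF'⟩ := exists_isHomogeneous_cofactor hD hFs hF.ne_zero
    obtain rfl | he := Nat.eq_zero_or_pos e
    · have hDunit := isUnit_of_isHomogeneous_zero hD (left_ne_zero_of_mul hG0)
      have hbezout := card_le_mul_of_isRelPrime hF.ne_zero hG0 hF.mem hG
        ((isRelPrime_mul_unit_left hDunit).2 hrel)
      have hcard := hF.mul_le_card hT (hF.le_degree hG hG0) (by omega)
        fun H hH => ihj (by omega) hH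
      nlinarith
    · have hf : f ≠ 0 := by
        rintro rfl
        exact hdvd (mul_dvd_mul_left D
          (isUnit_of_isHomogeneous_zero hF' (right_ne_zero_of_mul hF.ne_zero)).dvd)
      exact hF.not_isRelPrime_cofactors ih hT hG hG0 hD he (by omega) hj hrel

theorem coprimeDegreeBound (n : ℕ) : CoprimeDegreeBound K n := by
  induction n using Nat.strong_induction_on with
  | _ n ih =>
  intro T hTne hT a b F hF G hG hFG
  by_contra! hab
  have hF0 : F ≠ 0 := by
    rintro rfl
    exact not_isUnit_of_mem_vanishingForms hTne hG (isRelPrime_zero_left.1 hFG)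
  have hG0 : G ≠ 0 := by
    rintro rfl
    exact not_isUnit_of_mem_vanishingForms hTne hF (isRelPrime_zero_right.1 hFG)
  obtain ⟨s, hsa, H, hH⟩ := exists_isMinimalForm ((Submodule.ne_bot_iff _).2 ⟨F, hF, hF0⟩)
  have hsb := hH.le_degree hG hG0
  exact not_isUnit_of_mem_vanishingForms hTne hH.mem
    (hFG (hH.dvd_of_coprimeDegreeBound ih hTne hT (by omega) hF)
      (hH.dvd_of_coprimeDegreeBound ih hTne hT (by omega) hG))

lemma HasFullRelation.exists_vanishingForms_ne_bot {d : ℕ} (hT : HasFullRelation T d)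
    (hcard : 4 * T.card < (d + 2) * (d + 4)) :
    ∃ k, 2 * k ≤ d + 1 ∧ vanishingForms T k ≠ ⊥ := by
  by_contra! hbot
  have hfull (k : ℕ) (hk : 2 * k ≤ d + 1) : 2 * hilbertFunction T k = (k + 1) * (k + 2) := by
    rw [← two_mul_finrank_homogeneousSubmodule_fin_three K,
      ← hilbertFunction_add_finrank_vanishingForms T k, hbot k hk, finrank_bot, add_zero]
  obtain ⟨k, rfl | rfl⟩ := Nat.even_or_odd' d
  · have := hT.hilbertFunction_add_le (k := k) (l := k) (by omega)
    have := hfull k (by omega)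
    nlinarith
  · have := hT.hilbertFunction_add_le (k := k) (l := k + 1) (by omega)
    have := hfull k (by omega)
    have := hfull (k + 1) (by omega)
    nlinarith

theorem HasFullRelation.exists_curve_of_card_lt {d : ℕ} (hTne : T.Nonempty)
    (hT : HasFullRelation T d) (hcard : 4 * T.card < (d + 2) * (d + 4)) :
    ∃ s, 1 ≤ s ∧ 2 * s ≤ d + 1 ∧ ∃ F ∈ vanishingForms T s, F ≠ 0 ∧
      s * (d + 3 - s) ≤ T.card := by
  obtain ⟨k, hkd, hk⟩ := hT.exists_vanishingForms_ne_bot hcard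
  obtain ⟨s, hsk, F, hF⟩ := exists_isMinimalForm hk
  refine ⟨s, pos_of_mem_vanishingForms hTne hF.mem hF.ne_zero, by omega, F, hF.mem, hF.ne_zero, ?_⟩
  have hdvd : ∀ G ∈ vanishingForms T (d + 1 - s), F ∣ G := fun G hG =>
    hF.dvd_of_coprimeDegreeBound (fun m _ => coprimeDegreeBound m) hTne hT (by omega) hG
  have hle := hF.mul_le_card hT (by omega) (by omega) hdvd
  rwa [show d + 1 - s + 2 = d + 3 - s by omega] at hle

theorem stmt_1_general (S : Set (ℙ K (Fin 3 → K))) (hfin : S.Finite) (d : ℕ)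
    (hcard : 4 * S.ncard < (d + 2) * (d + 4))
    (hcurve : ∀ t : ℕ, 1 ≤ t → 2 * t ≤ d + 1 →
      ∀ C : MvPolynomial (Fin 3) K, C ≠ 0 → C.IsHomogeneous t →
        (S ∩ {p | eval p.rep C = 0}).ncard < t * (d + 3 - t)) :
    ∀ P ∈ S, ∃ F : MvPolynomial (Fin 3) K, F.IsHomogeneous d ∧
      (∀ Q ∈ S, Q ≠ P → eval Q.rep F = 0) ∧ eval P.rep F ≠ 0 := by
  intro P hP
  by_contra! hcon
  lift S to Finset (ℙ K (Fin 3 → K)) using hfin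
  obtain ⟨T, hTS, hPT, hT⟩ := exists_hasFullRelation_of_not_separated hP hcon
  rw [Set.ncard_coe_finset] at hcard
  have hTcard : T.card ≤ S.card := Finset.card_le_card hTS
  obtain ⟨s, hs, hsd, F, hF, hF0, hle⟩ := hT.exists_curve_of_card_lt ⟨P, hPT⟩ (by omega)
  rw [mem_vanishingForms] at hF
  refine (hcurve s hs hsd F hF0 hF.1).not_ge (hle.trans ?_)
  rw [← Set.ncard_coe_finset]
  exact Set.ncard_le_ncard (fun p hp => ⟨hTS hp, hF.2 p hp⟩) (S.finite_toSet.inter_of_left _)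

end CayleyBacharach

theorem stmt_1 (S : Set (ProjPt 2)) (hfin : S.Finite) (d : ℕ) (hd : 3 ≤ d)
    (hcard : 6 * S.ncard ≤ d ^ 2 + 9 * d + 16)
    (hcurve : ∀ t : ℕ, 1 ≤ t → 2 * t ≤ d + 3 →
      ∀ C : MvPolynomial (Fin 3) ℂ, C ≠ 0 → C.IsHomogeneous t →
        ((S ∩ {p : ProjPt 2 | VanishesAt C p}).ncard : ℤ)
          ≤ (t : ℤ) * ((d : ℤ) + 3 - (t : ℤ)) - 2) :
    ∀ P ∈ S, ∃ F : MvPolynomial (Fin 3) ℂ, F.IsHomogeneous d ∧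
      (∀ Q ∈ S, Q ≠ P → VanishesAt F Q) ∧ ¬ VanishesAt F P := by
  refine stmt_1_general S hfin d (by nlinarith) fun t ht htd C hC hCt => ?_
  zify [show t ≤ d + 3 by omega]
  exact (hcurve t ht (by omega) C hC hCt).trans_lt (sub_lt_self _ two_pos)
end
end
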